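/- Let P be a locally finite poset, Q a subset of P, and R = P \ Q. For all x < z in P, the Möbius function of P satisfies μ_P(x,z) = Σ_{y ∈ [x,z)_Q} μ_P(x,y) · μ_R(y,z), where [x,z)_Q denotes the subposet {x} ∪ ([x,z] ∩ Q) of the interval [x,z] (excluding z unless it is contrived in), and μ_R(y,z) is the Möbius function of the subposet {y,z} ∪ ([y,z] ∩ R). -/

import Mathlib

attribute [local instance] Classical.propDecidable

noncomputable def mcfF {P : Type*} [PartialOrder P] [LocallyFiniteOrder P]
    (p : P → Prop) (y z : P) : ℤ :=
  if h : p y ∧ p z then IncidenceAlgebra.mu ℤ (α := {w : P // p w}) ⟨y, h.1⟩ ⟨z, h.2⟩ else 0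

theorem mcfF_rec {P : Type*} [PartialOrder P] [LocallyFiniteOrder P]
    (p : P → Prop) (y z : P) (hy : p y) (hz : p z) (hne : y ≠ z) :
    mcfF p y z = - ∑ w ∈ Finset.Ioc y z, mcfF p w z := by
  unfold mcfF
  rw [dif_pos ⟨hy, hz⟩, IncidenceAlgebra.mu_eq_neg_sum_Ioc_of_ne (by simpa using hne)]
  congr 1
  rw [Finset.subtype_Ioc_eq]
  have h1 : ∑ w ∈ Finset.Ioc y z, mcfF p w z
      = ∑ w ∈ (Finset.Ioc y z).filter p, mcfF p w z := by
    rw [Finset.sum_filter]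
    refine Finset.sum_congr rfl fun w _ => ?_
    split_ifs with h
    · rfl
    · simp [mcfF, h]
  unfold mcfF at h1
  rw [h1, ← Finset.subtype_map, Finset.sum_map]
  refine Finset.sum_congr rfl fun w _ => ?_
  rw [dif_pos ⟨w.2, hz⟩]
  rfl

theorem mcfF_congr {P : Type*} [PartialOrder P] [LocallyFiniteOrder P]
    (p q : P → Prop) (z : P) (n : ℕ) : ∀ y, (Finset.Icc y z).card ≤ n → y ≤ z → p z → q z →
    (∀ w, y ≤ w → w ≤ z → (p w ↔ q w)) → mcfF p y z = mcfF q y z := by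
  induction n with
  | zero =>
    intro y hn hyz
    have : y ∈ Finset.Icc y z := by simp [hyz]
    simp only [Nat.le_zero, Finset.card_eq_zero] at hn
    simp [hn] at this
  | succ n ih =>
    intro y hn hyz hz hz' h
    by_cases hy : p y
    · have hy' := (h y le_rfl hyz).1 hy
      by_cases hne : y = z
      · subst hne
        simp [mcfF, hy, hy']
      · rw [mcfF_rec p y z hy hz hne, mcfF_rec q y z hy' hz' hne]
        congr 1
        refine Finset.sum_congr rfl fun w hw => ?_
        rw [Finset.mem_Ioc] at hw
        refine ih w ?_ hw.2 hz hz' fun v h1 h2 => h v (hw.1.le.trans h1) h2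
        have : (Finset.Icc w z).card < (Finset.Icc y z).card := by
          refine Finset.card_lt_card ?_
          exact Finset.Icc_ssubset_Icc_left hyz hw.1 le_rfl
        omega
    · have hy' : ¬ q y := fun hq => hy ((h y le_rfl hyz).2 hq)
      simp [mcfF, hy, hy']

theorem mobius_complement_factorization
    {P : Type*} [PartialOrder P] [LocallyFiniteOrder P]
    (Q : Set P) (x z : P) (hxz : x < z) :
    IncidenceAlgebra.mu ℤ x z =
      ∑ y ∈ (Finset.Icc x z).filter (fun y => (y = x ∨ y ∈ Q) ∧ y ≠ z),
        IncidenceAlgebra.mu ℤ x y *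
          IncidenceAlgebra.mu ℤ
            (α := {w : P // w = y ∨ w = z ∨ (y ≤ w ∧ w ≤ z ∧ w ∉ Q)})
            ⟨y, Or.inl rfl⟩ ⟨z, Or.inr (Or.inl rfl)⟩ := by
  let pr : P → P → Prop := fun y w => w = y ∨ w = z ∨ (y ≤ w ∧ w ≤ z ∧ w ∉ Q)
  let G : P → ℤ := fun y => mcfF (pr y) y z
  have hpy : ∀ y, pr y y := fun y => Or.inl rfl
  have hpz : ∀ y, pr y z := fun y => Or.inr (Or.inl rfl)
  have hG : ∀ y, IncidenceAlgebra.mu ℤ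
            (α := {w : P // w = y ∨ w = z ∨ (y ≤ w ∧ w ≤ z ∧ w ∉ Q)})
            ⟨y, Or.inl rfl⟩ ⟨z, Or.inr (Or.inl rfl)⟩ = G y := by
    intro y
    simp only [G, mcfF]
    rw [dif_pos ⟨hpy y, hpz y⟩]
    congr!
  simp only [hG]
  have hGz : G z = 1 := by
    simp only [G, mcfF]
    rw [dif_pos ⟨hpy z, hpz z⟩]
    simp
  have hrec : ∀ y, y < z →
      G y = - ∑ w ∈ Finset.Ioc y z, if w = z ∨ w ∉ Q then G w else 0 := by
    intro y hy
    simp only [G]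
    rw [mcfF_rec _ _ _ (hpy y) (hpz y) hy.ne]
    congr 1
    refine Finset.sum_congr rfl fun w hw => ?_
    rw [Finset.mem_Ioc] at hw
    split_ifs with h
    · refine mcfF_congr _ _ z _ w le_rfl hw.2 (hpz y) (hpz w) fun v h1 h2 => ?_
      have h3 : y < v := hw.1.trans_le h1
      have h4 := h3.ne'
      have h5 := h3.le
      simp only [pr]
      constructor
      · tauto
      · rintro (rfl | h6)
        · tauto
        · tauto
    · have : ¬ pr y w := by
        have := hw.1.ne'
        simp only [pr]
        tauto
      simp [mcfF, this]
  let g : P → ℤ := fun w => if w = z ∨ w ∉ Q then G w else 0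
  let h : P → ℤ := fun y => ∑ w ∈ Finset.Icc y z, g w
  have hh : ∀ y, y < z → h y = g y - G y := by
    intro y hy
    simp only [h]
    rw [← Finset.Ioc_insert_left hy.le, Finset.sum_insert (by simp), hrec y hy]
    simp only [g]
    ring
  have hz1 : h z = 1 := by simp [h, g, hGz]
  have key : ∑ y ∈ Finset.Icc x z, IncidenceAlgebra.mu ℤ x y * h y = g x := by
    simp only [h, Finset.mul_sum]
    rw [Finset.sum_comm' (t' := Finset.Icc x z) (s' := fun w => Finset.Icc x w)]
    · simp only [← Finset.sum_mul, IncidenceAlgebra.sum_Icc_mu_right]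
      simp [hxz.le]
    · intro a b
      simp only [Finset.mem_Icc]
      constructor
      · rintro ⟨⟨h1, h2⟩, h3, h4⟩
        exact ⟨⟨h1, h3⟩, h1.trans h3, h4⟩
      · rintro ⟨⟨h1, h2⟩, h3, h4⟩
        exact ⟨⟨h1, h2.trans h4⟩, h2, h4⟩
  rw [← Finset.Ico_insert_right hxz.le, Finset.sum_insert (by simp), hz1, mul_one,
    ← Finset.Ioo_insert_left hxz, Finset.sum_insert (by simp), hh x hxz] at key
  rw [IncidenceAlgebra.mu_self, one_mul] at key
  rw [Finset.sum_filter, ← Finset.Ico_insert_right hxz.le, Finset.sum_insert (by simp),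
    ← Finset.Ioo_insert_left hxz, Finset.sum_insert (by simp), if_neg (by simp),
    if_pos ⟨Or.inl rfl, hxz.ne⟩, IncidenceAlgebra.mu_self, one_mul]
  have : ∑ y ∈ Finset.Ioo x z, IncidenceAlgebra.mu ℤ x y * h y =
      - ∑ y ∈ Finset.Ioo x z, if (y = x ∨ y ∈ Q) ∧ y ≠ z then
        IncidenceAlgebra.mu ℤ x y * G y else 0 := by
    rw [← Finset.sum_neg_distrib]
    refine Finset.sum_congr rfl fun y hy => ?_
    rw [Finset.mem_Ioo] at hy
    rw [hh y hy.2]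
    have h1 := hy.1.ne'
    have h2 := hy.2.ne
    by_cases hq : y ∈ Q <;> simp [g, h1, h2, hq]
  linarith
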